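/- For every integer n ≥ 2, the (n+1)-dimensional n-ary Filippov algebra C₂(−1/4) degenerates to C₃; that is, the structure of C₃ lies in the closure of the GL(V)-orbit of the structure of C₂(−1/4). -/

import Mathlib

open Function Submodule

/-! Common framework: `V = ℂ^{n+1}`, `n`-ary multiplications as functions
`(Fin n → V) → V`, the action of `GL(V)` on them, orbits, and the
(n+1)-dimensional n-ary Filippov algebras of Kaygorodov–Volkov, each described
as an alternating `n`-linear map by its values on the increasing tuples of
distinct standard basis vectors (0-indexed: `bt n j` is the tuple omitting `e j`). -/

/-- The underlying space `V = ℂ^{n+1}`. -/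
abbrev nV (n : ℕ) : Type := Fin (n + 1) → ℂ

/-- The `j`-th standard basis vector of `V` (0-indexed). -/
def sb (n : ℕ) (j : Fin (n + 1)) : nV n := Pi.single j 1

/-- The increasing `n`-tuple of standard basis vectors omitting `e j`. -/
def bt (n : ℕ) (j : Fin (n + 1)) : Fin n → nV n := fun k => sb n (j.succAbove k)

/-- The action of `GL(V)` (invertible linear maps) on `n`-ary multiplications:
`(g • μ)(x₁, …, xₙ) = g (μ (g⁻¹ x₁, …, g⁻¹ xₙ))`. -/
noncomputable def glAct (n : ℕ) (g : nV n ≃ₗ[ℂ] nV n) (μ : (Fin n → nV n) → nV n) :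
    (Fin n → nV n) → nV n :=
  fun x => g (μ fun i => g.symm (x i))

/-- The `GL(V)`-orbit of an `n`-ary multiplication. -/
def glOrbit (n : ℕ) (μ : (Fin n → nV n) → nV n) : Set ((Fin n → nV n) → nV n) :=
  {ν | ∃ g : nV n ≃ₗ[ℂ] nV n, ν = glAct n g μ}

/-- The algebra `B`: `[e₂, …, e_{n+1}] = e₁` (0-indexed: the tuple omitting `e 0`
maps to `e 0`), all other increasing basis products zero. -/
def IsB (n : ℕ) (μ : AlternatingMap ℂ (nV n) (nV n) (Fin n)) : Prop :=
  μ (bt n 0) = sb n 0 ∧ ∀ j : Fin (n + 1), j ≠ 0 → μ (bt n j) = 0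

/-- The algebra `C₁`: `[e₂, …, e_{n+1}] = e₁`, `[e₁, e₃, …, e_{n+1}] = e₂`. -/
def IsC1 (n : ℕ) (μ : AlternatingMap ℂ (nV n) (nV n) (Fin n)) : Prop :=
  μ (bt n 0) = sb n 0 ∧ μ (bt n 1) = sb n 1 ∧
    ∀ j : Fin (n + 1), j ≠ 0 → j ≠ 1 → μ (bt n j) = 0

/-- The algebra `C₂(α)`: `[e₂, …, e_{n+1}] = α e₁ + e₂`, `[e₁, e₃, …, e_{n+1}] = e₂`. -/
def IsC2 (n : ℕ) (α : ℂ) (μ : AlternatingMap ℂ (nV n) (nV n) (Fin n)) : Prop :=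
  μ (bt n 0) = α • sb n 0 + sb n 1 ∧ μ (bt n 1) = sb n 1 ∧
    ∀ j : Fin (n + 1), j ≠ 0 → j ≠ 1 → μ (bt n j) = 0

/-- The algebra `C₃`: `[e₁, e₃, …, e_{n+1}] = e₁`, `[e₂, e₃, …, e_{n+1}] = e₂`. -/
def IsC3 (n : ℕ) (μ : AlternatingMap ℂ (nV n) (nV n) (Fin n)) : Prop :=
  μ (bt n 1) = sb n 0 ∧ μ (bt n 0) = sb n 1 ∧
    ∀ j : Fin (n + 1), j ≠ 0 → j ≠ 1 → μ (bt n j) = 0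

/-- The algebra `D_r`: `[e₁, …, e_{i-1}, e_{i+1}, …, e_{n+1}] = e_i` for `1 ≤ i ≤ r`
(0-indexed: the tuple omitting `e j` maps to `e j` for `j < r` and to `0` otherwise). -/
def IsD (n r : ℕ) (μ : AlternatingMap ℂ (nV n) (nV n) (Fin n)) : Prop :=
  ∀ j : Fin (n + 1), ((j : ℕ) < r → μ (bt n j) = sb n j) ∧ (r ≤ (j : ℕ) → μ (bt n j) = 0)

/-- Alternating maps on `V` are equal as soon as they agree on the increasing tuples of
distinct standard basis vectors. -/
theorem alternatingMap_ext_bt {n : ℕ} {f g : AlternatingMap ℂ (nV n) (nV n) (Fin n)}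
    (h : ∀ j, f (bt n j) = g (bt n j)) : f = g := by
  refine Module.Basis.ext_alternating (Pi.basisFun ℂ (Fin (n + 1))) fun v hv => ?_
  obtain ⟨j, hj⟩ : ∃ j, ∀ k, v k ≠ j := by
    by_contra! hs
    simpa using Fintype.card_le_of_surjective v hs
  choose s hs using fun k => Fin.exists_succAbove_eq (hj k)
  have hinj : Injective s := fun a b hab => hv (by rw [← hs a, ← hs b, hab])
  have hσ : (fun k => Pi.basisFun ℂ (Fin (n + 1)) (v k)) =
      bt n j ∘ Equiv.ofBijective s (Finite.injective_iff_bijective.mp hinj) := by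
    funext k
    simp [bt, sb, hs]
  rw [hσ, f.map_perm, g.map_perm, h]

theorem cons_apply_two {m : ℕ} {α : Type*} (a : α) (f : Fin (m + 2) → α) :
    (Fin.cons a f : Fin (m + 2 + 1) → α) 2 = f 1 := rfl

theorem two_mod_add_three (m : ℕ) : 2 % (m + 2 + 1) = 2 := Nat.mod_eq_of_lt (by lia)

/-- The inverse of the change of basis `e₁ ↦ e₁ - 2 e₂`, `e₂ ↦ t e₂`, `e₃ ↦ 2 e₃`. -/
noncomputable def quarterEquiv (m : ℕ) (t : ℂ) (ht : t ≠ 0) : nV (m + 2) ≃ₗ[ℂ] nV (m + 2) where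
  toFun y := Fin.cons (y 0) (Fin.cons (t⁻¹ * (y 1 + 2 * y 0))
    (Fin.cons (2⁻¹ * y 2) fun k => y k.succ.succ.succ))
  invFun x := Fin.cons (x 0) (Fin.cons (t * x 1 - 2 * x 0)
    (Fin.cons (2 * x 2) fun k => x k.succ.succ.succ))
  map_add' x y := by
    funext i
    refine Fin.cases ?_ (Fin.cases ?_ (Fin.cases ?_ fun k => ?_)) i <;>
      simp [cons_apply_two] <;> ring
  map_smul' a x := by
    funext i
    refine Fin.cases ?_ (Fin.cases ?_ (Fin.cases ?_ fun k => ?_)) i <;>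
      simp [cons_apply_two] <;> ring
  left_inv x := by
    funext i
    refine Fin.cases ?_ (Fin.cases ?_ (Fin.cases ?_ fun k => ?_)) i <;> simp [ht, cons_apply_two]
  right_inv x := by
    funext i
    refine Fin.cases ?_ (Fin.cases ?_ (Fin.cases ?_ fun k => ?_)) i <;> simp [ht, cons_apply_two]

/-- The scaling factors of `quarterEquiv`. -/
def quarterScale (m : ℕ) (t : ℂ) : Fin (m + 3) → ℂ :=
  Fin.cons 1 (Fin.cons t (Fin.cons 2 fun _ => 1))

/-- The basis `e₁ - 2 e₂, e₂, e₃, …`. -/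
def shearedBasis (m : ℕ) : Fin (m + 3) → nV (m + 2) :=
  Fin.cons (sb (m + 2) 0 - (2 : ℂ) • sb (m + 2) 1) fun k => sb (m + 2) k.succ

theorem quarterEquiv_symm_sb (m : ℕ) (t : ℂ) (ht : t ≠ 0) (i : Fin (m + 3)) :
    (quarterEquiv m t ht).symm (sb (m + 2) i) = quarterScale m t i • shearedBasis m i := by
  funext l
  change (Fin.cons (sb (m + 2) i 0) (Fin.cons (t * sb (m + 2) i 1 - 2 * sb (m + 2) i 0)
    (Fin.cons (2 * sb (m + 2) i 2) fun k => sb (m + 2) i k.succ.succ.succ)) : nV (m + 2)) l = _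
  refine Fin.cases ?_ (Fin.cases ?_ (Fin.cases ?_ fun k => ?_)) i <;>
  refine Fin.cases ?_ (Fin.cases ?_ (Fin.cases ?_ fun k => ?_)) l <;>
  simp [quarterScale, shearedBasis, sb, Pi.single_apply, Fin.ext_iff, cons_apply_two,
    two_mod_add_three]

theorem map_sheared_zero {m : ℕ} (μ : AlternatingMap ℂ (nV (m + 2)) (nV (m + 2)) (Fin (m + 2))) :
    μ (fun k => shearedBasis m ((0 : Fin (m + 3)).succAbove k)) = μ (bt (m + 2) 0) := by
  congr 1

theorem map_sheared_succ {m : ℕ} (μ : AlternatingMap ℂ (nV (m + 2)) (nV (m + 2)) (Fin (m + 2)))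
    (j : Fin (m + 2)) :
    μ (fun k => shearedBasis m (j.succ.succAbove k)) =
      μ (bt (m + 2) j.succ) - (2 : ℂ) • μ (update (bt (m + 2) j.succ) 0 (sb (m + 2) 1)) := by
  have h : (fun k => shearedBasis m (j.succ.succAbove k)) =
      update (bt (m + 2) j.succ) 0 (sb (m + 2) 0 - (2 : ℂ) • sb (m + 2) 1) := by
    funext k
    refine Fin.cases ?_ (fun k => ?_) k
    · simp [shearedBasis]
    · simp [shearedBasis, bt]
  have h0 : update (bt (m + 2) j.succ) 0 (sb (m + 2) 0) = bt (m + 2) j.succ := by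
    rw [update_eq_self_iff]
    simp [bt]
  rw [h, μ.map_update_sub, μ.map_update_smul, h0]

theorem map_sheared_one {m : ℕ} (μ : AlternatingMap ℂ (nV (m + 2)) (nV (m + 2)) (Fin (m + 2))) :
    μ (fun k => shearedBasis m ((1 : Fin (m + 3)).succAbove k)) =
      μ (bt (m + 2) 1) - (2 : ℂ) • μ (bt (m + 2) 0) := by
  have h : update (bt (m + 2) (Fin.succ 0)) 0 (sb (m + 2) 1) = bt (m + 2) 0 := by
    funext k
    refine Fin.cases ?_ (fun k => ?_) k <;> simp [bt]
  have := map_sheared_succ μ 0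
  rwa [h] at this

theorem map_sheared_succ_succ {m : ℕ}
    (μ : AlternatingMap ℂ (nV (m + 2)) (nV (m + 2)) (Fin (m + 2))) (j : Fin (m + 1)) :
    μ (fun k => shearedBasis m (j.succ.succ.succAbove k)) = μ (bt (m + 2) j.succ.succ) := by
  have h : μ (update (bt (m + 2) j.succ.succ) 0 (sb (m + 2) 1)) = 0 := by
    refine μ.map_eq_zero_of_eq _ (i := 0) (j := 1) ?_ (by simp)
    have h1 : j.succ.succ.succAbove (1 : Fin (m + 2)) = 1 := by
      rw [← Fin.succ_zero_eq_one, Fin.succ_succAbove_succ, Fin.succ_succAbove_zero]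
      rfl
    simp [bt, h1]
  rw [map_sheared_succ, h, smul_zero, sub_zero]

/-- The transport of a multiplication along `quarterEquiv`, as an alternating map. -/
noncomputable def quarterTransport {m : ℕ}
    (μ : AlternatingMap ℂ (nV (m + 2)) (nV (m + 2)) (Fin (m + 2))) (t : ℂ) (ht : t ≠ 0) :
    AlternatingMap ℂ (nV (m + 2)) (nV (m + 2)) (Fin (m + 2)) :=
  (quarterEquiv m t ht).toLinearMap.compAlternatingMap
    (μ.compLinearMap (quarterEquiv m t ht).symm.toLinearMap)

theorem quarterTransport_bt {m : ℕ}
    (μ : AlternatingMap ℂ (nV (m + 2)) (nV (m + 2)) (Fin (m + 2))) (t : ℂ) (ht : t ≠ 0)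
    (j : Fin (m + 3)) :
    quarterTransport μ t ht (bt (m + 2) j) = (∏ k, quarterScale m t (j.succAbove k)) •
      quarterEquiv m t ht (μ fun k => shearedBasis m (j.succAbove k)) := by
  have h : (fun k => (quarterEquiv m t ht).symm (bt (m + 2) j k)) =
      fun k => quarterScale m t (j.succAbove k) • shearedBasis m (j.succAbove k) :=
    funext fun k => quarterEquiv_symm_sb m t ht _
  change quarterEquiv m t ht (μ fun k => (quarterEquiv m t ht).symm (bt (m + 2) j k)) = _
  rw [h, ← μ.coe_multilinearMap, MultilinearMap.map_smul_univ, map_smul]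

section IsC2

variable {m : ℕ} {μ : AlternatingMap ℂ (nV (m + 2)) (nV (m + 2)) (Fin (m + 2))}

theorem quarterTransport_bt_zero (hμ : IsC2 (m + 2) (-(1 / 4) : ℂ) μ) (t : ℂ) (ht : t ≠ 0) :
    quarterTransport μ t ht (bt (m + 2) 0) = sb (m + 2) 1 - (t / 2) • sb (m + 2) 0 := by
  have hp : ∏ k, quarterScale m t ((0 : Fin (m + 3)).succAbove k) = t * 2 := by
    simp [Fin.prod_univ_succ, quarterScale]
  rw [quarterTransport_bt, hp, map_sheared_zero, hμ.1]
  funext l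
  refine Fin.cases ?_ (Fin.cases ?_ (Fin.cases ?_ fun k => ?_)) l <;>
    simp [quarterEquiv, sb, Fin.ext_iff, cons_apply_two,
    two_mod_add_three] <;> field_simp <;> norm_num

theorem quarterTransport_bt_one (hμ : IsC2 (m + 2) (-(1 / 4) : ℂ) μ) (t : ℂ) (ht : t ≠ 0) :
    quarterTransport μ t ht (bt (m + 2) 1) = sb (m + 2) 0 := by
  have hp : ∏ k, quarterScale m t ((1 : Fin (m + 3)).succAbove k) = 2 := by
    simp [Fin.prod_univ_succ, quarterScale]
  rw [quarterTransport_bt, hp, map_sheared_one, hμ.1, hμ.2.1]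
  funext l
  refine Fin.cases ?_ (Fin.cases ?_ (Fin.cases ?_ fun k => ?_)) l <;>
    simp [quarterEquiv, sb, Fin.ext_iff, cons_apply_two,
    two_mod_add_three] <;> norm_num

theorem quarterTransport_bt_succ_succ (hμ : IsC2 (m + 2) (-(1 / 4) : ℂ) μ) (t : ℂ) (ht : t ≠ 0)
    (j : Fin (m + 1)) : quarterTransport μ t ht (bt (m + 2) j.succ.succ) = 0 := by
  rw [quarterTransport_bt, map_sheared_succ_succ, hμ.2.2 _ (Fin.succ_ne_zero _) j.succ_succ_ne_one,
    map_zero, smul_zero]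

/-- The transports of `C₂(-1/4)` lie on an affine line through `C₃`. -/
theorem quarterTransport_eq (hμ : IsC2 (m + 2) (-(1 / 4) : ℂ) μ)
    {ν : AlternatingMap ℂ (nV (m + 2)) (nV (m + 2)) (Fin (m + 2))} (hν : IsC3 (m + 2) ν)
    (t : ℂ) (ht : t ≠ 0) :
    quarterTransport μ t ht = ν + t • (quarterTransport μ 1 one_ne_zero - ν) := by
  refine alternatingMap_ext_bt fun j => ?_
  rw [AlternatingMap.add_apply, AlternatingMap.smul_apply, AlternatingMap.sub_apply]
  refine Fin.cases ?_ (Fin.cases ?_ fun k => ?_) j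
  · rw [quarterTransport_bt_zero hμ, quarterTransport_bt_zero hμ, hν.2.1]
    module
  · rw [Fin.succ_zero_eq_one, quarterTransport_bt_one hμ, quarterTransport_bt_one hμ, hν.1]
    module
  · rw [quarterTransport_bt_succ_succ hμ, quarterTransport_bt_succ_succ hμ,
      hν.2.2 _ (Fin.succ_ne_zero _) k.succ_succ_ne_one]
    simp

end IsC2

/-- For every integer `n ≥ 2`, the algebra `C₂(-1/4)` degenerates to `C₃`. -/
theorem C2_quarter_degenerates_to_C3 (n : ℕ) (hn : 2 ≤ n)
    (μ ν : AlternatingMap ℂ (nV n) (nV n) (Fin n))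
    (hμ : IsC2 n (-(1 / 4) : ℂ) μ) (hν : IsC3 n ν) :
    ⇑ν ∈ closure (glOrbit n ⇑μ) := by
  obtain ⟨m, rfl⟩ := Nat.exists_eq_add_of_le' hn
  set ρ := quarterTransport μ 1 one_ne_zero - ν with hρ
  have hcont : Continuous fun t : ℂ => (⇑ν + t • ⇑ρ : (Fin (m + 2) → nV (m + 2)) → nV (m + 2)) := by
    fun_prop
  have hlim : Filter.Tendsto
      (fun t : ℂ => (⇑ν + t • ⇑ρ : (Fin (m + 2) → nV (m + 2)) → nV (m + 2)))
      (nhdsWithin 0 {0}ᶜ) (nhds ⇑ν) := by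
    simpa using (hcont.tendsto 0).mono_left nhdsWithin_le_nhds
  refine mem_closure_of_tendsto hlim ?_
  filter_upwards [self_mem_nhdsWithin] with t ht
  exact ⟨quarterEquiv m t ht, (congrArg DFunLike.coe (quarterTransport_eq hμ hν t ht)).symm⟩
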